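/- Let $k$ be a field, let $m \geq 1$ and $\kappa \geq 1$ be integers, and set $n = 2^{m-1} - 1$. In the polynomial ring over $k$ in the $2m$ variables $\alpha_{1,0}, \alpha_{1,1}, \dots, \alpha_{m,0}, \alpha_{m,1}$, define for each $0 \leq j \leq n$, writing $j$ in binary as $j = \sum_{l=2}^{m} b_l(j)\, 2^{m-l}$ with digits $b_l(j) \in \{0,1\}$, the multidegree-$(1,\dots,1)$ monomials $x_j = \alpha_{1,0} \prod_{l=2}^{m} \alpha_{l, b_l(j)}$ and $y_j = \alpha_{1,1} \prod_{l=2}^{m} \alpha_{l, b_l(j)}$. Let $\overline{B} = B(x,y)$ and $\overline{A} = A(x,y)$ be the associated banded matrices of sizes $\kappa \times (2n+2\kappa)$ and $(2n+2\kappa) \times \kappa$. Then: (1) $\overline{B} \cdot \overline{A} = 0$, and (2) for every tuple $(v_1, \dots, v_m)$ with each $v_i \in k^2 \setminus \{0\}$, the matrices $\overline{A}$ and $\overline{B}$ evaluated at $\alpha_{i,s} = (v_i)_s$ both have rank $\kappa$. -/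

import Mathlib

/-- The `κ × (2n+2κ)` banded matrix `B(x,y)` of the Spindler–Trautmann monad. -/
def spindlerTrautmannB {R : Type} [CommRing R] (n κ : ℕ) (x y : Fin (n + 1) → R) :
    Matrix (Fin κ) (Fin (2 * n + 2 * κ)) R :=
  Matrix.of fun i j =>
    if h : (j : ℕ) < n + κ ∧ (i : ℕ) ≤ (j : ℕ) ∧ (j : ℕ) - (i : ℕ) ≤ n then
      x ⟨(j : ℕ) - (i : ℕ), by omega⟩
    else if h' : n + κ ≤ (j : ℕ) ∧ (i : ℕ) ≤ (j : ℕ) - (n + κ) ∧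
        (j : ℕ) - (n + κ) - (i : ℕ) ≤ n then
      y ⟨(j : ℕ) - (n + κ) - (i : ℕ), by omega⟩
    else 0

/-- The `(2n+2κ) × κ` banded matrix `A(x,y)` of the Spindler–Trautmann monad. -/
def spindlerTrautmannA {R : Type} [CommRing R] (n κ : ℕ) (x y : Fin (n + 1) → R) :
    Matrix (Fin (2 * n + 2 * κ)) (Fin κ) R :=
  Matrix.of fun i j =>
    if h : (i : ℕ) < n + κ ∧ (j : ℕ) ≤ (i : ℕ) ∧ (i : ℕ) - (j : ℕ) ≤ n then
      -y ⟨(i : ℕ) - (j : ℕ), by omega⟩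
    else if h' : n + κ ≤ (i : ℕ) ∧ (j : ℕ) ≤ (i : ℕ) - (n + κ) ∧
        (i : ℕ) - (n + κ) - (j : ℕ) ≤ n then
      x ⟨(i : ℕ) - (n + κ) - (j : ℕ), by omega⟩
    else 0

/-!
Reading the columns of `B(x, y)` and the rows of `A(x, y)` in two blocks of size `n + κ` gives
`B = [T x | T y]` and `Aᵀ = [-T y | T x]`, where `T z` is the upper banded Toeplitz matrix with
entries `z_0, …, z_n` along each row. Hence `B * A = T y * (T x)ᵀ - T x * (T y)ᵀ`, which vanishes as
soon as `x_a y_b = y_a x_b` for all `a, b`; for the Segre monomials this is the exchange of the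
first factors. If `z_p` is the first nonzero entry of `z`, the columns `p, …, p + κ - 1` of `T z`
form an upper triangular matrix of determinant `z_p ^ κ`, so both ranks are `κ` wherever `x` or `y`
does not vanish, and at every point of `ℙ¹ × ⋯ × ℙ¹` some Segre monomial is nonzero.
-/

open Matrix

section FullRank

variable {m n R : Type*} [Fintype n] [CommRing R] [IsDomain R]

lemma rank_eq_card_height_of_det_submatrix_ne_zero [Fintype m] [DecidableEq m] (M : Matrix m n R)
    (e : m → n) (h : (M.submatrix id e).det ≠ 0) : M.rank = Fintype.card m :=
  M.rank_le_card_height.antisymm <|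
    (rank_of_det_ne_zero h).symm.trans_le (M.rank_submatrix_le id e)

lemma rank_eq_card_width_of_det_submatrix_ne_zero [DecidableEq n] (M : Matrix m n R) (e : n → m)
    (h : (M.submatrix e id).det ≠ 0) : M.rank = Fintype.card n :=
  M.rank_le_card_width.antisymm <|
    (rank_of_det_ne_zero h).symm.trans_le (M.rank_submatrix_le e id)

end FullRank

section BandedToeplitz

/-- The `κ × (n + κ)` upper banded Toeplitz matrix whose row `i` holds `z 0, …, z n` in the columns
`i, …, i + n`. It is the common shape of the blocks of `spindlerTrautmannB` and
`spindlerTrautmannA`. -/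
def bandedToeplitz {R : Type*} [Zero R] {n : ℕ} (κ : ℕ) (z : Fin (n + 1) → R) :
    Matrix (Fin κ) (Fin (n + κ)) R :=
  Matrix.of fun i s =>
    if h : (i : ℕ) ≤ s ∧ (s : ℕ) - i ≤ n then z ⟨s - i, Nat.lt_succ_of_le h.2⟩ else 0

lemma bandedToeplitz_neg {R : Type*} [NegZeroClass R] {n : ℕ} (κ : ℕ) (z : Fin (n + 1) → R) :
    bandedToeplitz κ (-z) = -bandedToeplitz κ z := by
  ext i s
  simp only [bandedToeplitz, of_apply, Matrix.neg_apply, Pi.neg_apply]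
  split_ifs <;> simp

lemma bandedToeplitz_mul_transpose_comm {R : Type*} [NonUnitalNonAssocSemiring R] {n : ℕ} (κ : ℕ)
    {x y : Fin (n + 1) → R} (h : ∀ a b, x a * y b = y a * x b) :
    bandedToeplitz κ x * (bandedToeplitz κ y)ᵀ = bandedToeplitz κ y * (bandedToeplitz κ x)ᵀ := by
  ext i j
  simp only [mul_apply, transpose_apply]
  refine Finset.sum_congr rfl fun s _ => ?_
  simp only [bandedToeplitz, of_apply]
  split_ifs <;> simp [h]

lemma det_bandedToeplitz_submatrix {R : Type*} [CommRing R] {n : ℕ} (κ : ℕ)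
    {z : Fin (n + 1) → R} {p : Fin (n + 1)} (hz : ∀ q < p, z q = 0) :
    ((bandedToeplitz κ z).submatrix id fun i : Fin κ => ⟨p + i, by omega⟩).det = z p ^ κ := by
  rw [det_of_isUpperTriangular]
  · simp [bandedToeplitz, Nat.le_of_lt_succ p.isLt]
  · intro i j hji
    have hji : (j : ℕ) < i := hji
    simp only [bandedToeplitz, submatrix_apply, id_eq, of_apply]
    split_ifs
    · exact hz _ (Fin.lt_def.mpr (by dsimp only; omega))
    · rfl

lemma exists_det_bandedToeplitz_submatrix_ne_zero {R : Type*} [CommRing R] [IsDomain R] {n : ℕ}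
    (κ : ℕ) {z : Fin (n + 1) → R} (hz : z ≠ 0) :
    ∃ e : Fin κ → Fin (n + κ), ((bandedToeplitz κ z).submatrix id e).det ≠ 0 := by
  classical
  have hex : ∃ p, z p ≠ 0 := Function.ne_iff.mp hz
  have hmin : ∀ q < Fin.find _ hex, z q = 0 := fun q hq => not_not.mp (Fin.find_min hex hq)
  exact ⟨_, (det_bandedToeplitz_submatrix κ hmin).trans_ne (pow_ne_zero κ (Fin.find_spec hex))⟩

end BandedToeplitz

section SpindlerTrautmann

variable {R : Type} [CommRing R] {n : ℕ} (κ : ℕ) (x y : Fin (n + 1) → R)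

/-- The splitting of the `2n + 2κ` long indices of the Spindler–Trautmann matrices into two
consecutive blocks of size `n + κ`. -/
def blockEquiv (n κ : ℕ) : Fin (n + κ) ⊕ Fin (n + κ) ≃ Fin (2 * n + 2 * κ) :=
  finSumFinEquiv.trans (finCongr (by omega))

lemma spindlerTrautmannB_submatrix_blockEquiv :
    (spindlerTrautmannB n κ x y).submatrix id (blockEquiv n κ) =
      fromCols (bandedToeplitz κ x) (bandedToeplitz κ y) := by
  ext i (s | s) <;> simp [spindlerTrautmannB, bandedToeplitz, blockEquiv, s.isLt.not_ge]

lemma spindlerTrautmannA_eq_transpose :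
    spindlerTrautmannA n κ x y = (spindlerTrautmannB n κ (-y) x)ᵀ :=
  rfl

lemma spindlerTrautmannA_submatrix_blockEquiv :
    (spindlerTrautmannA n κ x y).submatrix (blockEquiv n κ) id =
      fromRows (-(bandedToeplitz κ y)ᵀ) (bandedToeplitz κ x)ᵀ := by
  rw [spindlerTrautmannA_eq_transpose, ← transpose_submatrix,
    spindlerTrautmannB_submatrix_blockEquiv, transpose_fromCols, bandedToeplitz_neg, transpose_neg]

lemma spindlerTrautmannB_map {S : Type} [CommRing S] (f : R →+* S) :
    (spindlerTrautmannB n κ x y).map f = spindlerTrautmannB n κ (f ∘ x) (f ∘ y) := by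
  ext i j
  simp only [spindlerTrautmannB, map_apply, of_apply, Function.comp_apply]
  split_ifs <;> simp

lemma spindlerTrautmannA_map {S : Type} [CommRing S] (f : R →+* S) :
    (spindlerTrautmannA n κ x y).map f = spindlerTrautmannA n κ (f ∘ x) (f ∘ y) := by
  have hneg : f ∘ (-y) = -(f ∘ y) := funext fun j => map_neg f (y j)
  rw [spindlerTrautmannA_eq_transpose, transpose_map, spindlerTrautmannB_map, hneg,
    spindlerTrautmannA_eq_transpose]

variable {x y}

theorem spindlerTrautmannB_mul_spindlerTrautmannA (h : ∀ a b, x a * y b = y a * x b) :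
    spindlerTrautmannB n κ x y * spindlerTrautmannA n κ x y = 0 :=
  calc
    spindlerTrautmannB n κ x y * spindlerTrautmannA n κ x y
      = (spindlerTrautmannB n κ x y).submatrix id (blockEquiv n κ) *
          (spindlerTrautmannA n κ x y).submatrix (blockEquiv n κ) id := by
        rw [submatrix_mul_equiv, submatrix_id_id]
    _ = bandedToeplitz κ x * -(bandedToeplitz κ y)ᵀ +
          bandedToeplitz κ y * (bandedToeplitz κ x)ᵀ := by
        rw [spindlerTrautmannB_submatrix_blockEquiv, spindlerTrautmannA_submatrix_blockEquiv,
          fromCols_mul_fromRows]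
    _ = 0 := by
        rw [Matrix.mul_neg, bandedToeplitz_mul_transpose_comm κ h, neg_add_cancel]

variable [IsDomain R]

lemma exists_det_spindlerTrautmannB_submatrix_ne_zero (h : x ≠ 0 ∨ y ≠ 0) :
    ∃ e : Fin κ → Fin (2 * n + 2 * κ), ((spindlerTrautmannB n κ x y).submatrix id e).det ≠ 0 := by
  have hB := spindlerTrautmannB_submatrix_blockEquiv κ x y
  rcases h with hx | hy
  · obtain ⟨e, he⟩ := exists_det_bandedToeplitz_submatrix_ne_zero κ hx
    refine ⟨blockEquiv n κ ∘ Sum.inl ∘ e, ?_⟩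
    rwa [show bandedToeplitz κ x = _ from congrArg toCols₁ hB.symm] at he
  · obtain ⟨e, he⟩ := exists_det_bandedToeplitz_submatrix_ne_zero κ hy
    refine ⟨blockEquiv n κ ∘ Sum.inr ∘ e, ?_⟩
    rwa [show bandedToeplitz κ y = _ from congrArg toCols₂ hB.symm] at he

theorem rank_spindlerTrautmannB (h : x ≠ 0 ∨ y ≠ 0) : (spindlerTrautmannB n κ x y).rank = κ := by
  obtain ⟨e, he⟩ := exists_det_spindlerTrautmannB_submatrix_ne_zero κ h
  rw [rank_eq_card_height_of_det_submatrix_ne_zero _ e he, Fintype.card_fin]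

theorem rank_spindlerTrautmannA (h : x ≠ 0 ∨ y ≠ 0) : (spindlerTrautmannA n κ x y).rank = κ := by
  obtain ⟨e, he⟩ := exists_det_spindlerTrautmannB_submatrix_ne_zero κ
    (h.symm.imp_left neg_ne_zero.mpr)
  rw [← det_transpose, transpose_submatrix, ← spindlerTrautmannA_eq_transpose] at he
  rw [rank_eq_card_width_of_det_submatrix_ne_zero _ e he, Fintype.card_fin]

end SpindlerTrautmann

section SegreMonomials

/-- The tuple `(s, b_2(j), …, b_m(j))` of second indices of the variables in the Segre monomial
`α_{1,s} ∏_{l=2}^m α_{l,b_l(j)}`. The factor `l` of the paper has the 0-based index `i = l - 1`. -/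
def segreIndex (m : ℕ) (s : Fin 2) (j : ℕ) (i : Fin m) : Fin 2 :=
  if (i : ℕ) = 0 then s else if j / 2 ^ (m - 1 - (i : ℕ)) % 2 = 1 then 1 else 0

/-- The Segre monomial `a_{1,s} ∏_{l=2}^m a_{l,b_l(j)}` in the entries of `a`: this is `x_j` for
`s = 0` and `y_j` for `s = 1`. -/
def segreMonomial {R : Type*} [CommMonoid R] {m : ℕ} (a : Fin m → Fin 2 → R)
    (s : Fin 2) (j : ℕ) : R :=
  ∏ i, a i (segreIndex m s j i)

lemma exists_segreIndex_eq {m : ℕ} (hm : 1 ≤ m) (c : Fin m → Fin 2) :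
    ∃ j < 2 ^ (m - 1), segreIndex m (c ⟨0, hm⟩) j = c := by
  let digits : Fin (m - 1) → Fin 2 := fun t => c ⟨m - 1 - t, by omega⟩
  refine ⟨finFunctionFinEquiv digits, Fin.isLt _, funext fun i => ?_⟩
  obtain hi | hi := eq_or_ne (i : ℕ) 0
  · simp [segreIndex, show i = ⟨0, hm⟩ from Fin.ext hi]
  have hdigit : (finFunctionFinEquiv digits : ℕ) / 2 ^ (m - 1 - (i : ℕ)) % 2 = c i := by
    have hreverse : m - 1 - (m - 1 - (i : ℕ)) = i := by omega
    simpa only [digits, hreverse] using! congrArg Fin.val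
      (congrFun (finFunctionFinEquiv.symm_apply_apply digits) ⟨m - 1 - i, by omega⟩)
  rw [segreIndex, if_neg hi, hdigit]
  split_ifs <;> omega

lemma segreMonomial_mul_comm {R : Type*} [CommMonoid R] {m : ℕ} (a : Fin m → Fin 2 → R)
    (s t : Fin 2) (j l : ℕ) :
    segreMonomial a s j * segreMonomial a t l = segreMonomial a t j * segreMonomial a s l := by
  simp only [segreMonomial, ← Finset.prod_mul_distrib]
  refine Finset.prod_congr rfl fun i _ => ?_
  by_cases hi : (i : ℕ) = 0
  · simp only [segreIndex, hi, if_true, mul_comm]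
  · simp only [segreIndex, hi, if_false]

lemma map_segreMonomial {R S F : Type*} [CommMonoid R] [CommMonoid S] [FunLike F R S]
    [MonoidHomClass F R S] (f : F) {m : ℕ} (a : Fin m → Fin 2 → R) (s : Fin 2) (j : ℕ) :
    f (segreMonomial a s j) = segreMonomial (fun i t => f (a i t)) s j :=
  map_prod f _ _

lemma exists_segreMonomial_ne_zero {R : Type*} [CommMonoidWithZero R] [Nontrivial R]
    [NoZeroDivisors R] {m : ℕ} (hm : 1 ≤ m) {v : Fin m → Fin 2 → R} (hv : ∀ i, v i ≠ 0) :
    ∃ s, ∃ j < 2 ^ (m - 1), segreMonomial v s j ≠ 0 := by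
  choose c hc using fun i => Function.ne_iff.mp (hv i)
  obtain ⟨j, hj, hjc⟩ := exists_segreIndex_eq hm c
  refine ⟨c ⟨0, hm⟩, j, hj, Finset.prod_ne_zero_iff.mpr fun i _ => ?_⟩
  rw [hjc]
  exact hc i

end SegreMonomials

/-- Points over arbitrary domains `K` include all geometric points of `ℙ¹ × ⋯ × ℙ¹`, not only the
`k`-rational ones. -/
theorem monad_on_P1s_exists_general
    (k K : Type) [CommRing k] [CommRing K] [IsDomain K] (f : k →+* K) (m κ : ℕ) (hm : 1 ≤ m)
    (n : ℕ) (hn : 2 ^ (m - 1) ≤ n + 1)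
    (x y : Fin (n + 1) → MvPolynomial (Fin m × Fin 2) k)
    (hx : ∀ j, x j = segreMonomial (fun i s => MvPolynomial.X (i, s)) 0 j)
    (hy : ∀ j, y j = segreMonomial (fun i s => MvPolynomial.X (i, s)) 1 j) :
    spindlerTrautmannB n κ x y * spindlerTrautmannA n κ x y = 0 ∧
    ∀ v : Fin m → Fin 2 → K, (∀ i, v i ≠ 0) →
      ((spindlerTrautmannA n κ x y).map (MvPolynomial.eval₂Hom f fun p => v p.1 p.2)).rank = κ ∧
      ((spindlerTrautmannB n κ x y).map (MvPolynomial.eval₂Hom f fun p => v p.1 p.2)).rank = κ := by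
  constructor
  · refine spindlerTrautmannB_mul_spindlerTrautmannA κ fun a b => ?_
    rw [hx, hy, hx, hy, segreMonomial_mul_comm]
  · intro v hv
    set ev := MvPolynomial.eval₂Hom f fun p : Fin m × Fin 2 => v p.1 p.2
    have hev : ∀ i s, ev (MvPolynomial.X (i, s)) = v i s := fun i s =>
      MvPolynomial.eval₂Hom_X' _ _ _
    have hne : ev ∘ x ≠ 0 ∨ ev ∘ y ≠ 0 := by
      obtain ⟨s, j, hj, hsj⟩ := exists_segreMonomial_ne_zero hm hv
      have hx' : ev (x ⟨j, by omega⟩) = segreMonomial v 0 j := by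
        simp only [hx, map_segreMonomial, hev]
      have hy' : ev (y ⟨j, by omega⟩) = segreMonomial v 1 j := by
        simp only [hy, map_segreMonomial, hev]
      fin_cases s
      · exact Or.inl (Function.ne_iff.mpr ⟨_, hx'.trans_ne hsj⟩)
      · exact Or.inr (Function.ne_iff.mpr ⟨_, hy'.trans_ne hsj⟩)
    rw [spindlerTrautmannA_map, spindlerTrautmannB_map]
    exact ⟨rank_spindlerTrautmannA κ hne, rank_spindlerTrautmannB κ hne⟩

/-- **Monads on `ℙ¹ × ⋯ × ℙ¹` (m factors).** With `n = 2^(m-1) - 1` and the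
multidegree-`(1,…,1)` monomials `x_j = α_{1,0} ∏_{l=2}^m α_{l,b_l(j)}`,
`y_j = α_{1,1} ∏_{l=2}^m α_{l,b_l(j)}` (where `b_l(j) = (j / 2^(m-l)) % 2` is the
binary digit of `j` of weight `2^(m-l)`), the banded matrices `B̄ = B(x,y)` and
`Ā = A(x,y)` satisfy `B̄ ⬝ Ā = 0` and, at every tuple `(v_1,…,v_m)` of nonzero vectors
`v_i ∈ k² \ {0}`, both evaluate to matrices of rank `κ`: they give a linear monad
`0 → 𝒪_X(-1,…,-1)^κ → 𝒪_X^{2n+2κ} → 𝒪_X(1,…,1)^κ → 0` on `X = ℙ¹ × ⋯ × ℙ¹`. -/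
theorem monad_on_P1s_exists
    (k : Type) [Field k] (m κ : ℕ) (hm : 1 ≤ m) (hκ : 1 ≤ κ)
    (n : ℕ) (hn : n = 2 ^ (m - 1) - 1)
    (x y : Fin (n + 1) → MvPolynomial (Fin m × Fin 2) k)
    (hx : ∀ j : Fin (n + 1), x j = ∏ i : Fin m, MvPolynomial.X
      (i, if (i : ℕ) = 0 then 0 else
        if ((j : ℕ) / 2 ^ (m - 1 - (i : ℕ))) % 2 = 1 then 1 else 0))
    (hy : ∀ j : Fin (n + 1), y j = ∏ i : Fin m, MvPolynomial.X
      (i, if (i : ℕ) = 0 then 1 else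
        if ((j : ℕ) / 2 ^ (m - 1 - (i : ℕ))) % 2 = 1 then 1 else 0)) :
    spindlerTrautmannB n κ x y * spindlerTrautmannA n κ x y = 0 ∧
    ∀ v : Fin m → Fin 2 → k, (∀ i, v i ≠ 0) →
      ((spindlerTrautmannA n κ x y).map (MvPolynomial.eval (fun p => v p.1 p.2))).rank = κ ∧
      ((spindlerTrautmannB n κ x y).map (MvPolynomial.eval (fun p => v p.1 p.2))).rank = κ := by
  exact monad_on_P1s_exists_general k k (RingHom.id k) m κ hm n (by omega) x y hx hy
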